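/- For every integer M ≥ 4, ∑_{ν=2}^{M-2} (2ν-1)(2M-2ν-1) ζ₂(2M-2ν, 2ν) = (3/4)(M-3) ζ(2M). -/

import Mathlib

open scoped BigOperators

/-- Double zeta value `ζ₂(k₁,k₂) = ∑_{1 ≤ m < m+n} 1/(m^{k₁} (m+n)^{k₂})`. -/
noncomputable def zeta2 (k1 k2 : ℕ) : ℂ :=
  ∑' p : ℕ × ℕ, 1 / (((p.1 : ℂ) + 1) ^ k1 * ((p.1 : ℂ) + 1 + ((p.2 : ℂ) + 1)) ^ k2)


section PowerSeriesIdentity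

open PowerSeries

/-- The power series `B - X B'`, where `B = X / (exp X - 1)`; its `n`-th coefficient is
`(1 - n) Bₙ / n!`. -/
noncomputable def weightedBernoulliSeries : ℚ⟦X⟧ :=
  bernoulliPowerSeries ℚ - X * d⁄dX ℚ (bernoulliPowerSeries ℚ)

theorem X_mul_derivative_bernoulliPowerSeries :
    (X : ℚ⟦X⟧) * d⁄dX ℚ (bernoulliPowerSeries ℚ)
      = bernoulliPowerSeries ℚ - bernoulliPowerSeries ℚ ^ 2 - X * bernoulliPowerSeries ℚ := by
  have h := bernoulliPowerSeries_mul_exp_sub_one ℚ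
  have h' := congrArg (d⁄dX ℚ) h
  rw [Derivation.leibniz, map_sub, derivative_X, derivative_exp, derivative_one] at h'
  simp only [smul_eq_mul, sub_zero] at h'
  linear_combination bernoulliPowerSeries ℚ * h'
    - (d⁄dX ℚ (bernoulliPowerSeries ℚ) + bernoulliPowerSeries ℚ) * h

theorem weightedBernoulliSeries_eq :
    weightedBernoulliSeries
      = bernoulliPowerSeries ℚ ^ 2 + X * bernoulliPowerSeries ℚ := by
  rw [weightedBernoulliSeries, X_mul_derivative_bernoulliPowerSeries]
  ring

theorem X_mul_derivative_weightedBernoulliSeries :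
    (X : ℚ⟦X⟧) * d⁄dX ℚ weightedBernoulliSeries
      = 2 * weightedBernoulliSeries
        - (2 * bernoulliPowerSeries ℚ + X) * weightedBernoulliSeries := by
  have h : d⁄dX ℚ weightedBernoulliSeries
      = 2 * bernoulliPowerSeries ℚ * d⁄dX ℚ (bernoulliPowerSeries ℚ)
        + X * d⁄dX ℚ (bernoulliPowerSeries ℚ) + bernoulliPowerSeries ℚ := by
    rw [weightedBernoulliSeries_eq, sq, map_add, Derivation.leibniz, Derivation.leibniz,
      derivative_X]
    simp only [smul_eq_mul]
    ring
  rw [h, weightedBernoulliSeries_eq]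
  linear_combination
    (2 * bernoulliPowerSeries ℚ + X) * X_mul_derivative_bernoulliPowerSeries

/-- The formal counterpart of the differential equation of the Weierstrass `℘`-function,
degenerated to `1 / sinh ^ 2`. -/
theorem weightedBernoulliSeries_ode :
    (X : ℚ⟦X⟧) * d⁄dX ℚ (X * d⁄dX ℚ weightedBernoulliSeries)
        - 5 * (X * d⁄dX ℚ weightedBernoulliSeries) + 6 * weightedBernoulliSeries
      = 6 * weightedBernoulliSeries ^ 2 + X ^ 2 * weightedBernoulliSeries := by
  have h2 : d⁄dX ℚ (2 : ℚ⟦X⟧) = 0 := by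
    simpa using (d⁄dX ℚ).map_natCast 2
  have h : d⁄dX ℚ (X * d⁄dX ℚ weightedBernoulliSeries)
      = 2 * d⁄dX ℚ weightedBernoulliSeries
        - (2 * bernoulliPowerSeries ℚ + X) * d⁄dX ℚ weightedBernoulliSeries
        - (2 * d⁄dX ℚ (bernoulliPowerSeries ℚ) + 1) * weightedBernoulliSeries := by
    rw [X_mul_derivative_weightedBernoulliSeries, map_sub, Derivation.leibniz,
      Derivation.leibniz, map_add, Derivation.leibniz, derivative_X, h2]
    simp only [smul_eq_mul]
    ring
  rw [h]
  have hB := X_mul_derivative_bernoulliPowerSeries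
  have hG := X_mul_derivative_weightedBernoulliSeries
  have hE := weightedBernoulliSeries_eq
  linear_combination (-3 - 2 * bernoulliPowerSeries ℚ - X) * hG
    - 2 * weightedBernoulliSeries * hB - 6 * weightedBernoulliSeries * hE

theorem coeff_X_mul_derivative (f : ℚ⟦X⟧) (n : ℕ) :
    coeff n (X * d⁄dX ℚ f) = n * coeff n f := by
  cases n with
  | zero => simp
  | succ n =>
    rw [coeff_succ_X_mul, coeff_derivative]
    push_cast
    ring

theorem coeff_weightedBernoulliSeries (n : ℕ) :
    coeff n weightedBernoulliSeries = (1 - n) * (bernoulli n / n.factorial) := by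
  rw [weightedBernoulliSeries, map_sub, coeff_X_mul_derivative, bernoulliPowerSeries, coeff_mk]
  simp only [eq_ratCast, Rat.cast_id]
  ring

theorem coeff_weightedBernoulliSeries_of_odd {n : ℕ} (hn : Odd n) :
    coeff n weightedBernoulliSeries = 0 := by
  rw [coeff_weightedBernoulliSeries]
  rcases eq_or_ne n 1 with rfl | h1
  · simp
  · have := hn.pos
    rw [bernoulli_eq_zero_of_odd hn (by omega)]
    simp

theorem sum_range_two_mul_add_one_of_odd_eq_zero {R : Type*} [AddCommMonoid R] (f : ℕ → R)
    (hf : ∀ n, Odd n → f n = 0) (m : ℕ) :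
    ∑ n ∈ Finset.range (2 * m + 1), f n = ∑ n ∈ Finset.range (m + 1), f (2 * n) := by
  induction m with
  | zero => simp
  | succ m ih =>
    rw [show 2 * (m + 1) + 1 = 2 * m + 1 + 1 + 1 by ring, Finset.sum_range_succ,
      Finset.sum_range_succ, ih, hf _ (odd_two_mul_add_one m), add_zero,
      Finset.sum_range_succ _ (m + 1)]
    rfl

theorem sum_coeff_weightedBernoulliSeries_mul (N : ℕ) :
    3 * ∑ i ∈ Finset.range (N + 1), coeff (2 * (i + 2)) weightedBernoulliSeries
        * coeff (2 * (N - i + 2)) weightedBernoulliSeries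
      = (N + 1) * (2 * N + 9) * coeff (2 * (N + 4)) weightedBernoulliSeries := by
  have hode := congrArg (coeff (2 * (N + 4))) weightedBernoulliSeries_ode
  have c5 : (5 : ℚ⟦X⟧) = C (5 : ℚ) := (map_ofNat C 5).symm
  have c6 : (6 : ℚ⟦X⟧) = C (6 : ℚ) := (map_ofNat C 6).symm
  rw [c5, c6, map_add, map_add, map_sub, coeff_C_mul, coeff_C_mul, coeff_C_mul,
    coeff_X_mul_derivative, coeff_X_mul_derivative, sq weightedBernoulliSeries,
    show 2 * (N + 4) = 2 * (N + 3) + 2 by ring, coeff_X_pow_mul, coeff_mul,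
    Finset.Nat.sum_antidiagonal_eq_sum_range_succ_mk,
    show (2 * (N + 3) + 2).succ = 2 * (N + 4) + 1 by omega,
    sum_range_two_mul_add_one_of_odd_eq_zero _ (fun n hn => by
      simp only [coeff_weightedBernoulliSeries_of_odd hn, zero_mul])] at hode
  rw [Finset.sum_range_succ, Finset.sum_range_succ, Finset.sum_range_succ',
    Finset.sum_range_succ'] at hode
  have hs : ∀ i ∈ Finset.range (N + 1),
      coeff (2 * (i + 1 + 1)) weightedBernoulliSeries
        * coeff (2 * (N + 3) + 2 - 2 * (i + 1 + 1)) weightedBernoulliSeries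
      = coeff (2 * (i + 2)) weightedBernoulliSeries
        * coeff (2 * (N - i + 2)) weightedBernoulliSeries := by
    intro i hi
    rw [Finset.mem_range] at hi
    rw [show 2 * (N + 3) + 2 - 2 * (i + 1 + 1) = 2 * (N - i + 2) by omega]
  rw [Finset.sum_congr rfl hs,
    show 2 * (N + 3) + 2 - 2 * (0 + 1) = 2 * (N + 3) by omega,
    show 2 * (N + 3) + 2 - 2 * 0 = 2 * (N + 4) by omega,
    show 2 * (N + 3) + 2 - 2 * (N + 1 + 1 + 1) = 2 by omega,
    show 2 * (N + 3) + 2 - 2 * (N + 1 + 1 + 1 + 1) = 0 by omega,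
    show 2 * (N + 1 + 1 + 1 + 1) = 2 * (N + 4) by ring,
    show 2 * (N + 1 + 1 + 1) = 2 * (N + 3) by ring,
    show 2 * (N + 3) + 2 = 2 * (N + 4) by ring] at hode
  have g0 : coeff 0 weightedBernoulliSeries = 1 := by
    rw [coeff_weightedBernoulliSeries]; simp
  have g2 : coeff 2 weightedBernoulliSeries = -1 / 12 := by
    rw [coeff_weightedBernoulliSeries, bernoulli_two]; norm_num [Nat.factorial]
  simp only [mul_zero, zero_add, mul_one, g0, g2] at hode
  push_cast at hode
  linear_combination (-1 / 2) * hode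

end PowerSeriesIdentity

section ZetaValues

theorem two_mul_sub_one_mul_riemannZeta (n : ℕ) (hn : n ≠ 0) :
    (2 * n - 1 : ℂ) * riemannZeta (2 * n)
      = (-1) ^ n * 2 ^ (2 * n) * (Real.pi : ℂ) ^ (2 * n) / 2
        * (PowerSeries.coeff (2 * n) weightedBernoulliSeries : ℚ) := by
  rw [riemannZeta_two_mul_nat hn, coeff_weightedBernoulliSeries]
  have h2 : (2 : ℂ) ^ (2 * n) = 2 ^ (2 * n - 1) * 2 := by
    rw [← pow_succ, Nat.sub_add_cancel (by omega)]
  rw [h2]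
  push_cast
  ring

theorem sum_weighted_riemannZeta_mul (N : ℕ) :
    6 * ∑ i ∈ Finset.range (N + 1),
        ((2 * (i + 2 : ℕ) - 1 : ℂ) * riemannZeta (2 * (i + 2 : ℕ)))
        * ((2 * (N - i + 2 : ℕ) - 1 : ℂ) * riemannZeta (2 * (N - i + 2 : ℕ)))
      = (N + 1) * (2 * N + 9) * (2 * N + 7) * riemannZeta (2 * (N + 4 : ℕ)) := by
  have hc : ∀ i ∈ Finset.range (N + 1),
      ((2 * (i + 2 : ℕ) - 1 : ℂ) * riemannZeta (2 * (i + 2 : ℕ)))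
        * ((2 * (N - i + 2 : ℕ) - 1 : ℂ) * riemannZeta (2 * (N - i + 2 : ℕ)))
      = (-1) ^ (N + 4) * 2 ^ (2 * (N + 4)) * (Real.pi : ℂ) ^ (2 * (N + 4)) / 4
        * ((PowerSeries.coeff (2 * (i + 2)) weightedBernoulliSeries
          * PowerSeries.coeff (2 * (N - i + 2)) weightedBernoulliSeries : ℚ) : ℂ) := by
    intro i hi
    obtain ⟨k, rfl⟩ := Nat.exists_eq_add_of_le (Nat.lt_succ_iff.mp (Finset.mem_range.mp hi))
    rw [two_mul_sub_one_mul_riemannZeta _ (by omega),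
      two_mul_sub_one_mul_riemannZeta _ (by omega), Nat.add_sub_cancel_left]
    push_cast
    ring
  rw [Finset.sum_congr rfl hc, ← Finset.mul_sum, ← Rat.cast_sum]
  have h := congrArg (fun q : ℚ => (q : ℂ)) (sum_coeff_weightedBernoulliSeries_mul N)
  have hz := two_mul_sub_one_mul_riemannZeta (N + 4) (by omega)
  simp only [Rat.cast_mul, Rat.cast_add, Rat.cast_natCast, Rat.cast_ofNat, Rat.cast_one] at h
  rw [show (2 * N + 7 : ℂ) = 2 * (N + 4 : ℕ) - 1 by push_cast; ring, mul_assoc _ (_ - _), hz]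
  linear_combination
    ((-1) ^ (N + 4) * 2 ^ (2 * (N + 4)) * (Real.pi : ℂ) ^ (2 * (N + 4)) / 2) * h

end ZetaValues

section HarmonicProduct

theorem summable_norm_one_div_nat_add_one_pow {a : ℕ} (ha : 1 < a) :
    Summable fun n : ℕ => ‖1 / ((n : ℂ) + 1) ^ a‖ := by
  have h := (summable_nat_add_iff 1).mpr (Real.summable_one_div_nat_pow.mpr ha)
  refine h.congr fun n => ?_
  rw [norm_div, norm_pow, norm_one, ← Nat.cast_add_one, Complex.norm_natCast]

theorem riemannZeta_natCast_eq_tsum {a : ℕ} (ha : 1 < a) :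
    riemannZeta a = ∑' n : ℕ, 1 / ((n : ℂ) + 1) ^ a := by
  rw [zeta_eq_tsum_one_div_nat_add_one_cpow (by simpa using ha)]
  simp only [Complex.cpow_natCast]

/-- Decomposition of `ℕ × ℕ` into the parts strictly above, strictly below and on the diagonal. -/
noncomputable def diagonalSplit : (ℕ × ℕ ⊕ ℕ × ℕ) ⊕ ℕ ≃ ℕ × ℕ :=
  Equiv.ofBijective
    (Sum.elim (Sum.elim (fun p => (p.1, p.1 + p.2 + 1)) (fun p => (p.1 + p.2 + 1, p.1)))
      fun m => (m, m)) <| by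
    constructor
    · rintro ((⟨a, b⟩ | ⟨a, b⟩) | a) ((⟨c, d⟩ | ⟨c, d⟩) | c) h <;>
        simp only [Sum.elim_inl, Sum.elim_inr, Prod.mk.injEq, Sum.inl.injEq, Sum.inr.injEq,
          reduceCtorEq] at h ⊢ <;> omega
    · rintro ⟨a, b⟩
      rcases lt_trichotomy a b with h | h | h
      · exact ⟨.inl (.inl (a, b - a - 1)), by simp; omega⟩
      · exact ⟨.inr a, by simp [h]⟩
      · exact ⟨.inl (.inr (b, a - b - 1)), by simp; omega⟩

@[simp]
theorem diagonalSplit_inl_inl (p : ℕ × ℕ) :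
    diagonalSplit (.inl (.inl p)) = (p.1, p.1 + p.2 + 1) := rfl

@[simp]
theorem diagonalSplit_inl_inr (p : ℕ × ℕ) :
    diagonalSplit (.inl (.inr p)) = (p.1 + p.2 + 1, p.1) := rfl

@[simp]
theorem diagonalSplit_inr (m : ℕ) : diagonalSplit (.inr m) = (m, m) := rfl

theorem riemannZeta_mul_riemannZeta {a b : ℕ} (ha : 1 < a) (hb : 1 < b) :
    riemannZeta a * riemannZeta b = zeta2 a b + zeta2 b a + riemannZeta (a + b : ℕ) := by
  have hA := summable_norm_one_div_nat_add_one_pow ha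
  have hB := summable_norm_one_div_nat_add_one_pow hb
  have hs := summable_mul_of_summable_norm hA hB
  rw [riemannZeta_natCast_eq_tsum ha, riemannZeta_natCast_eq_tsum hb,
    tsum_mul_tsum_of_summable_norm hA hB, ← diagonalSplit.tsum_eq]
  have hs' := (diagonalSplit.summable_iff).mpr hs
  have hl := hs'.comp_injective Sum.inl_injective
  have hll := hl.comp_injective Sum.inl_injective
  have hlr := hl.comp_injective Sum.inr_injective
  have hr := hs'.comp_injective Sum.inr_injective
  have h := ((hll.hasSum.sum hlr.hasSum).sum hr.hasSum).tsum_eq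
  refine h.trans ?_
  rw [riemannZeta_natCast_eq_tsum (by omega)]
  refine congrArg₂ _ (congrArg₂ _ (tsum_congr fun p => ?_) (tsum_congr fun p => ?_))
    (tsum_congr fun m => ?_)
  · simp only [Function.comp_apply, diagonalSplit_inl_inl]
    push_cast
    rw [one_div_mul_one_div]
    ring_nf
  · simp only [Function.comp_apply, diagonalSplit_inl_inr]
    push_cast
    rw [one_div_mul_one_div, mul_comm]
    ring_nf
  · simp only [Function.comp_apply, diagonalSplit_inr]
    rw [one_div_mul_one_div, pow_add]

end HarmonicProduct

theorem sum_range_two_mul_add_three_mul (a : ℂ) (n : ℕ) :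
    6 * ∑ i ∈ Finset.range n, (2 * i + 3 : ℂ) * (a - 2 * i)
      = 6 * a * n * (n + 2) - 2 * n * (n - 1) * (4 * n + 7) := by
  induction n with
  | zero => simp
  | succ n ih =>
    rw [Finset.sum_range_succ, mul_add, ih]
    push_cast
    ring

theorem Nakamura_second_weighted_sum_formula (M : ℕ) (hM : 4 ≤ M) :
    ∑ ν ∈ Finset.Icc 2 (M - 2),
        ((2 * ν - 1 : ℕ) : ℂ) * ((2 * M - 2 * ν - 1 : ℕ) : ℂ) * zeta2 (2 * M - 2 * ν) (2 * ν)
      = (3 / 4 : ℂ) * ((M : ℂ) - 3) * riemannZeta (2 * M) := by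
  obtain ⟨N, rfl⟩ : ∃ N, M = N + 4 := ⟨M - 4, by omega⟩
  set w : ℕ → ℂ := fun i => (2 * (i + 2 : ℕ) - 1) * (2 * (N - i + 2 : ℕ) - 1) with hw
  have hS : ∑ ν ∈ Finset.Icc 2 (N + 4 - 2),
        ((2 * ν - 1 : ℕ) : ℂ) * ((2 * (N + 4) - 2 * ν - 1 : ℕ) : ℂ)
          * zeta2 (2 * (N + 4) - 2 * ν) (2 * ν)
      = ∑ i ∈ Finset.range (N + 1), w i * zeta2 (2 * (N - i + 2)) (2 * (i + 2)) := by
    rw [show Finset.Icc 2 (N + 4 - 2) = Finset.Ico 2 (N + 3) by ext; simp; omega,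
      Finset.sum_Ico_eq_sum_range]
    refine Finset.sum_congr rfl fun i hi => ?_
    have hi' : i < N + 1 := Finset.mem_range.mp hi
    rw [show 2 * (2 + i) - 1 = 2 * i + 3 by omega,
      show 2 * (N + 4) - 2 * (2 + i) - 1 = 2 * (N - i) + 3 by omega,
      show 2 * (N + 4) - 2 * (2 + i) = 2 * (N - i + 2) by omega, add_comm 2 i, hw]
    push_cast
    ring
  have hflip : ∑ i ∈ Finset.range (N + 1), w i * zeta2 (2 * (N - i + 2)) (2 * (i + 2))
      = ∑ i ∈ Finset.range (N + 1), w i * zeta2 (2 * (i + 2)) (2 * (N - i + 2)) := by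
    rw [← Finset.sum_range_reflect]
    refine Finset.sum_congr rfl fun i hi => ?_
    have hi' : i < N + 1 := Finset.mem_range.mp hi
    simp only [hw]
    rw [show N + 1 - 1 - i = N - i by omega, show N - (N - i) = i by omega]
    ring
  have hweight : 6 * ∑ i ∈ Finset.range (N + 1), w i
      = (N + 1) * (4 * N ^ 2 + 32 * N + 54) := by
    have h : ∀ i ∈ Finset.range (N + 1), w i = (2 * i + 3 : ℂ) * ((2 * N + 3) - 2 * i) := by
      intro i hi
      have hi' : i ≤ N := Nat.lt_succ_iff.mp (Finset.mem_range.mp hi)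
      simp only [hw]
      push_cast [Nat.cast_sub hi']
      ring
    rw [Finset.sum_congr rfl h, sum_range_two_mul_add_three_mul]
    push_cast
    ring
  have hprod : ∑ i ∈ Finset.range (N + 1),
        ((2 * (i + 2 : ℕ) - 1 : ℂ) * riemannZeta (2 * (i + 2 : ℕ)))
        * ((2 * (N - i + 2 : ℕ) - 1 : ℂ) * riemannZeta (2 * (N - i + 2 : ℕ)))
      = ∑ i ∈ Finset.range (N + 1), w i * zeta2 (2 * (N - i + 2)) (2 * (i + 2))
        + ∑ i ∈ Finset.range (N + 1), w i * zeta2 (2 * (i + 2)) (2 * (N - i + 2))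
        + (∑ i ∈ Finset.range (N + 1), w i) * riemannZeta (2 * (N + 4 : ℕ)) := by
    rw [Finset.sum_mul, ← Finset.sum_add_distrib, ← Finset.sum_add_distrib]
    refine Finset.sum_congr rfl fun i hi => ?_
    have hi' : i < N + 1 := Finset.mem_range.mp hi
    have h := riemannZeta_mul_riemannZeta (a := 2 * (i + 2)) (b := 2 * (N - i + 2))
      (by omega) (by omega)
    rw [show 2 * (i + 2) + 2 * (N - i + 2) = 2 * (N + 4) by omega] at h
    rw [Nat.cast_mul 2 (i + 2), Nat.cast_mul 2 (N - i + 2), Nat.cast_mul 2 (N + 4),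
      Nat.cast_ofNat] at h
    simp only [hw]
    linear_combination
      ((2 * (i + 2 : ℕ) - 1 : ℂ) * (2 * (N - i + 2 : ℕ) - 1)) * h
  have hzeta := sum_weighted_riemannZeta_mul N
  rw [hprod, ← hflip] at hzeta
  rw [hS]
  have hN : ((N + 4 : ℕ) : ℂ) - 3 = N + 1 := by push_cast; ring
  rw [hN]
  linear_combination (1 / 12 : ℂ) * hzeta
    - (1 / 12 : ℂ) * riemannZeta (2 * (N + 4 : ℕ)) * hweight
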